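/- arXiv:2211.01187 — 2 statements merged into one kernel-verified Lean document; each statement's English description precedes it below -/
import Mathlib

section
/- If (y_t)_{t∈[0,T]} is a jointly measurable real-valued stochastic process whose sample paths are continuous and which satisfies 𝐄[sup_{t∈[0,T]} |y_t|] < ∞, then the map t ↦ L_t(y_t) is continuous on [0,T]. -/
open MeasureTheory Filter Topology

/-- The operator `L_t(η) := inf {x ≥ 0 : 𝐄[ℓ(·, t, x+η)] ≥ 0}`. -/
noncomputable def LopT {Ω : Type*} [MeasurableSpace Ω] (P : Measure Ω)
    (ℓ : Ω → ℝ → ℝ → ℝ) (t : ℝ) (η : Ω → ℝ) : ℝ :=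
  sInf {x : ℝ | 0 ≤ x ∧ 0 ≤ ∫ ω, ℓ ω t (x + η ω) ∂P}

/-!
`L_t(y_t)` is the generalized inverse at level `0` of `x ↦ 𝐄[ℓ(·, t, x + y_t)]` on `[0, ∞)`. By
dominated convergence this function is continuous in `t` for each fixed `x`, and it is strictly
increasing in `x`. The generalized inverse of a family of increasing functions is lower
semicontinuous in the parameter, and also upper semicontinuous when the functions are strictly
increasing: a strict inequality at a level near `L_{t₀}(y_{t₀})` persists for `t` near `t₀`.
The level `0` is reached because shifting by the random variable `y_t` does not change the limit of
the expectation as `x → ∞`.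
-/

section GeneralizedInverse

/-- The generalized inverse at level `c` of `f` restricted to `[a, ∞)`, as an infimum; it is the
junk value `sInf ∅` when `f` stays below `c` there. -/
noncomputable def generalizedInverse {α β : Type*} [LE α] [InfSet α] [LE β] (f : α → β) (a : α)
    (c : β) : α :=
  sInf {x | a ≤ x ∧ c ≤ f x}

variable {X α β : Type*} [ConditionallyCompleteLinearOrder α] [LinearOrder β]
  {f : α → β} {F : X → α → β} {s : Set X} {a x : α} {c : β}

theorem generalizedInverse_le (hax : a ≤ x) (hcx : c ≤ f x) : generalizedInverse f a c ≤ x :=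
  csInf_le ⟨a, fun _ hz => hz.1⟩ ⟨hax, hcx⟩

variable [DenselyOrdered α] [TopologicalSpace X]

theorem lowerSemicontinuousOn_generalizedInverse
    (hF : ∀ x, a ≤ x → UpperSemicontinuousOn (F · x) s)
    (hmono : ∀ t ∈ s, MonotoneOn (F t) (Set.Ici a)) (hne : ∀ t ∈ s, ∃ x, a ≤ x ∧ c ≤ F t x) :
    LowerSemicontinuousOn (fun t => generalizedInverse (F t) a c) s := by
  intro t₀ ht₀ v hv
  rcases lt_or_ge v a with hva | hav
  · filter_upwards [self_mem_nhdsWithin] with t ht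
    exact hva.trans_le (le_csInf (hne t ht) fun x hx => hx.1)
  · obtain ⟨w, hvw, hw⟩ := exists_between hv
    have haw : a ≤ w := hav.trans hvw.le
    have hneg : F t₀ w < c := not_le.1 fun h => hw.not_ge (generalizedInverse_le haw h)
    filter_upwards [hF w haw t₀ ht₀ c hneg, self_mem_nhdsWithin] with t hneg_t ht
    refine hvw.trans_le (le_csInf (hne t ht) fun x hx => le_of_not_gt fun hxw => ?_)
    exact (hx.2.trans (hmono t ht hx.1 haw hxw.le)).not_gt hneg_t

theorem upperSemicontinuousOn_generalizedInverse
    (hF : ∀ x, a ≤ x → LowerSemicontinuousOn (F · x) s)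
    (hmono : ∀ t ∈ s, StrictMonoOn (F t) (Set.Ici a)) (hne : ∀ t ∈ s, ∃ x, a ≤ x ∧ c ≤ F t x) :
    UpperSemicontinuousOn (fun t => generalizedInverse (F t) a c) s := by
  intro t₀ ht₀ v hv
  obtain ⟨x, ⟨hax, hcx⟩, hxv⟩ := exists_lt_of_csInf_lt (hne t₀ ht₀) hv
  obtain ⟨w, hxw, hwv⟩ := exists_between hxv
  have haw : a ≤ w := hax.trans hxw.le
  have hpos : c < F t₀ w := hcx.trans_lt (hmono t₀ ht₀ hax haw hxw)
  filter_upwards [hF w haw t₀ ht₀ c hpos] with t hpos_t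
  exact (generalizedInverse_le haw hpos_t.le).trans_lt hwv

theorem continuousOn_generalizedInverse [TopologicalSpace α] [OrderTopology α]
    [TopologicalSpace β] [OrderTopology β] (hF : ∀ x, a ≤ x → ContinuousOn (F · x) s)
    (hmono : ∀ t ∈ s, StrictMonoOn (F t) (Set.Ici a)) (hne : ∀ t ∈ s, ∃ x, a ≤ x ∧ c ≤ F t x) :
    ContinuousOn (fun t => generalizedInverse (F t) a c) s :=
  continuousOn_iff_lower_upperSemicontinuousOn.2
    ⟨lowerSemicontinuousOn_generalizedInverse (fun x hx => (hF x hx).upperSemicontinuousOn)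
      (fun t ht => (hmono t ht).monotoneOn) hne,
    upperSemicontinuousOn_generalizedInverse (fun x hx => (hF x hx).lowerSemicontinuousOn)
      hmono hne⟩

end GeneralizedInverse

section Expectation

variable {Ω : Type*} [MeasurableSpace Ω] {μ : Measure Ω}

theorem strictMono_integral [NeZero μ] {α : Type*} [Preorder α] {f : Ω → α → ℝ}
    (hf : ∀ ω, StrictMono (f ω)) (hint : ∀ x, Integrable (f · x) μ) :
    StrictMono fun x => ∫ ω, f ω x ∂μ := by
  intro x y hxy
  have hpos : ∀ ω, 0 < f ω y - f ω x := fun ω => sub_pos.2 (hf ω hxy)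
  have hsupport : Function.support (fun ω => f ω y - f ω x) = Set.univ :=
    Set.eq_univ_of_forall fun ω => (hpos ω).ne'
  rw [← sub_pos, ← integral_sub (hint y) (hint x),
    integral_pos_iff_support_of_nonneg (fun ω => (hpos ω).le) ((hint y).sub (hint x)), hsupport]
  exact Measure.measure_univ_pos.2 (NeZero.ne μ)

theorem eventually_lt_integral_comp_add {f : Ω → ℝ → ℝ} {η : Ω → ℝ} {r b : ℝ}
    (hf : ∀ ω, Monotone (f ω)) (hb : Integrable (f · b) μ)
    (hint : ∀ x, Integrable (fun ω => f ω (x + η ω)) μ) (hr : r < ∫ ω, f ω b ∂μ) :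
    ∀ᶠ x in atTop, r < ∫ ω, f ω (x + η ω) ∂μ := by
  -- The truncations at `f ω b` agree with `f ω b` for large `x`.
  have htendsto : Tendsto (fun x => ∫ ω, min (f ω (x + η ω)) (f ω b) ∂μ) atTop
      (𝓝 (∫ ω, f ω b ∂μ)) := by
    refine tendsto_integral_filter_of_dominated_convergence
      (fun ω => |f ω (0 + η ω)| + |f ω b|)
      (Eventually.of_forall fun x => ((hint x).inf hb).aestronglyMeasurable) ?_
      ((hint 0).abs.add hb.abs) (Eventually.of_forall fun ω => ?_)
    · filter_upwards [eventually_ge_atTop 0] with x hx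
      refine Eventually.of_forall fun ω => abs_le.2 ⟨?_, ?_⟩
      · have hshift : f ω (0 + η ω) ≤ f ω (x + η ω) := hf ω (by gcongr)
        refine le_min ?_ ?_ <;>
          linarith [neg_abs_le (f ω (0 + η ω)), neg_abs_le (f ω b), abs_nonneg (f ω (0 + η ω)),
            abs_nonneg (f ω b)]
      · linarith [min_le_right (f ω (x + η ω)) (f ω b), le_abs_self (f ω b),
          abs_nonneg (f ω (0 + η ω))]
    · refine tendsto_const_nhds.congr' ?_
      filter_upwards [eventually_ge_atTop (b - η ω)] with x hx
      exact (min_eq_right (hf ω (by linarith))).symm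
  filter_upwards [htendsto.eventually_const_lt hr] with x hx
  exact hx.trans_le (integral_mono ((hint x).inf hb) (hint x) fun ω => min_le_left _ _)

theorem integrable_comp_of_linear_growth [IsFiniteMeasure μ] {f : Ω → ℝ → ℝ} {η : Ω → ℝ} {L : ℝ}
    (hf : Measurable (Function.uncurry f)) (hgrowth : ∀ ω x, |f ω x| ≤ L * (1 + |x|))
    (hη : Integrable η μ) : Integrable (fun ω => f ω (η ω)) μ :=
  (((integrable_const 1).add hη.abs).const_mul L).mono'
    (hf.comp_aemeasurable (aemeasurable_id.prodMk hη.aemeasurable)).aestronglyMeasurable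
    (Eventually.of_forall fun ω => hgrowth ω (η ω))

theorem continuousOn_integral_comp_of_linear_growth [IsFiniteMeasure μ] {X : Type*}
    [TopologicalSpace X] [FirstCountableTopology X] {s : Set X} {ℓ : Ω → X → ℝ → ℝ}
    {η : X → Ω → ℝ} {g : Ω → ℝ} {L : ℝ}
    (hmeas : ∀ t ∈ s, Measurable fun p : Ω × ℝ => ℓ p.1 t p.2)
    (hcont : ∀ ω, ContinuousOn (fun p : X × ℝ => ℓ ω p.1 p.2) (s ×ˢ Set.univ))
    (hgrowth : ∀ ω, ∀ t ∈ s, ∀ x, |ℓ ω t x| ≤ L * (1 + |x|))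
    (hη_meas : ∀ t ∈ s, AEMeasurable (η t) μ) (hη_cont : ∀ ω, ContinuousOn (η · ω) s)
    (hg : Integrable g μ) (hη_le : ∀ ω, ∀ t ∈ s, |η t ω| ≤ g ω) :
    ContinuousOn (fun t => ∫ ω, ℓ ω t (η t ω) ∂μ) s := by
  refine continuousOn_of_dominated (bound := fun ω => L * (1 + g ω)) (fun t ht => ?_)
    (fun t ht => Eventually.of_forall fun ω => ?_) (((integrable_const 1).add hg).const_mul L)
    (Eventually.of_forall fun ω => ?_)
  · exact ((hmeas t ht).comp_aemeasurable
      (aemeasurable_id.prodMk (hη_meas t ht))).aestronglyMeasurable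
  · have hL : 0 ≤ L := by simpa using (abs_nonneg _).trans (hgrowth ω t ht 0)
    calc ‖ℓ ω t (η t ω)‖ ≤ L * (1 + |η t ω|) := hgrowth ω t ht _
      _ ≤ L * (1 + g ω) := by gcongr; exact hη_le ω t ht
  · exact (hcont ω).comp (continuousOn_id.prodMk (hη_cont ω)) fun t ht => ⟨ht, Set.mem_univ _⟩

end Expectation

theorem exists_pos_of_tendsto_coe_ereal {ι : Type*} {u : Filter ι} [u.NeBot] {φ : ι → ℝ}
    {l : EReal} (hl : 0 < l) (hφ : Tendsto (fun x => (φ x : EReal)) u (𝓝 l)) : ∃ x, 0 < φ x :=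
  (hφ.eventually_const_lt hl).exists.imp fun _ => EReal.coe_pos.1

theorem abs_le_iSup_abs_of_isCompact {X : Type*} [TopologicalSpace X] {K : Set X} {f : X → ℝ}
    (hK : IsCompact K) (hf : ContinuousOn f K) {t : X} (ht : t ∈ K) : |f t| ≤ ⨆ u : K, |f u| := by
  have hbdd : BddAbove (Set.range fun u : K => |f u|) :=
    Set.image_eq_range (fun u => |f u|) K ▸ hK.bddAbove_image hf.abs
  exact le_ciSup hbdd ⟨t, ht⟩

theorem stmt5_general {Ω : Type*} [MeasurableSpace Ω] (P : Measure Ω) [IsFiniteMeasure P]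
    (s : Set ℝ) (ℓ : Ω → ℝ → ℝ → ℝ)
    (hmeas : ∀ t ∈ s, Measurable fun p : Ω × ℝ => ℓ p.1 t p.2)
    (hcont : ∀ ω, ContinuousOn (fun p : ℝ × ℝ => ℓ ω p.1 p.2) (s ×ˢ Set.univ))
    (hmono : ∀ ω, ∀ t ∈ s, StrictMono (ℓ ω t))
    (L₀ : ℝ) (hgrowth : ∀ ω, ∀ t ∈ s, ∀ x, |ℓ ω t x| ≤ L₀ * (1 + |x|))
    (hpos : ∀ t ∈ s, ∃ b, 0 < ∫ ω, ℓ ω t b ∂P)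
    (y : ℝ → Ω → ℝ) (hymeas : ∀ t ∈ s, AEMeasurable (y t) P)
    (hypath : ∀ ω, ContinuousOn (y · ω) s)
    (g : Ω → ℝ) (hg : Integrable g P) (hyg : ∀ ω, ∀ t ∈ s, |y t ω| ≤ g ω) :
    ContinuousOn (fun t => LopT P ℓ t (y t)) s := by
  have hint : ∀ t ∈ s, ∀ x, Integrable (fun ω => ℓ ω t (x + y t ω)) P := fun t ht x =>
    integrable_comp_of_linear_growth (hmeas t ht) (hgrowth · t ht) <| (integrable_const x).add <|
      hg.mono' (hymeas t ht).aestronglyMeasurable (Eventually.of_forall (hyg · t ht))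
  refine continuousOn_generalizedInverse (F := fun t x => ∫ ω, ℓ ω t (x + y t ω) ∂P)
    (fun x _ => ?_) (fun t ht => StrictMono.strictMonoOn ?_ _) fun t ht => ?_
  · exact continuousOn_integral_comp_of_linear_growth hmeas hcont hgrowth
      (fun t ht => (hymeas t ht).const_add x) (fun ω => (hypath ω).const_add x)
      ((integrable_const |x|).add hg)
      fun ω t ht => (abs_add_le _ _).trans (add_le_add_right (hyg ω t ht) _)
  · obtain ⟨b, hb⟩ := hpos t ht
    have : NeZero P := ⟨by rintro rfl; simp at hb⟩
    exact strictMono_integral (fun ω _ _ hxx' => hmono ω t ht (by gcongr)) (hint t ht)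
  · obtain ⟨b, hb⟩ := hpos t ht
    have hreach := eventually_lt_integral_comp_add (fun ω => (hmono ω t ht).monotone)
      (.of_integral_ne_zero hb.ne') (hint t ht) hb
    obtain ⟨x, hx, hx₀⟩ := (hreach.and (eventually_ge_atTop 0)).exists
    exact ⟨x, hx₀, hx.le⟩

/-- If `(y_t)` is a jointly measurable process with continuous sample paths and
`𝐄[sup_{t ∈ [0,T]} |y_t|] < ∞`, then `t ↦ L_t(y_t)` is continuous on `[0, T]`. -/
theorem stmt5 {Ω : Type*} [MeasurableSpace Ω] (P : Measure Ω) [IsProbabilityMeasure P]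
    (T : ℝ) (hT : 0 < T)
    (ℓ : Ω → ℝ → ℝ → ℝ)
    (hmeas : Measurable (fun p : Ω × ℝ × ℝ => ℓ p.1 p.2.1 p.2.2))
    (hcont : ∀ ω, ContinuousOn (fun p : ℝ × ℝ => ℓ ω p.1 p.2) (Set.Icc 0 T ×ˢ Set.univ))
    (hmono : ∀ ω, ∀ t ∈ Set.Icc (0 : ℝ) T, StrictMono (fun y => ℓ ω t y))
    (L₀ : ℝ) (hL₀ : 0 < L₀)
    (hgrowth : ∀ ω, ∀ t ∈ Set.Icc (0 : ℝ) T, ∀ y, |ℓ ω t y| ≤ L₀ * (1 + |y|))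
    (hlim : ∀ t ∈ Set.Icc (0 : ℝ) T, ∃ l : EReal, 0 < l ∧
      Tendsto (fun x : ℝ => ((∫ ω, ℓ ω t x ∂P : ℝ) : EReal)) atTop (𝓝 l))
    (κ C : ℝ) (hκ : 1 < κ) (hC : 0 < C)
    (hbilip : ∀ ω, ∀ t ∈ Set.Icc (0 : ℝ) T, ∀ y₁ y₂,
      C * |y₁ - y₂| ≤ |ℓ ω t y₁ - ℓ ω t y₂| ∧ |ℓ ω t y₁ - ℓ ω t y₂| ≤ κ * C * |y₁ - y₂|)
    (y : ℝ → Ω → ℝ)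
    (hymeas : Measurable (fun q : ℝ × Ω => y q.1 q.2))
    (hypath : ∀ ω, ContinuousOn (fun t => y t ω) (Set.Icc 0 T))
    (hysup : Integrable (fun ω => ⨆ t : Set.Icc (0 : ℝ) T, |y t ω|) P) :
    ContinuousOn (fun t => LopT P ℓ t (y t)) (Set.Icc 0 T) :=
  stmt5_general P (Set.Icc 0 T) ℓ
    (fun _ _ => hmeas.comp (measurable_fst.prodMk (measurable_const.prodMk measurable_snd)))
    hcont hmono L₀ hgrowth
    (fun t ht => (hlim t ht).elim fun _ hl => exists_pos_of_tendsto_coe_ereal hl.1 hl.2)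
    y (fun _ _ => hymeas.of_uncurry_left.aemeasurable) hypath _ hysup
    fun ω _ ht => abs_le_iSup_abs_of_isCompact isCompact_Icc (hypath ω) ht
end

section
/- Define the reflection map Φ by Φ(y)_t := y_t + sup_{s∈[t,T]} L_s(y_s). Then for every real p ≥ 1 and all jointly measurable processes y¹, y² with continuous sample paths satisfying 𝐄[sup_{t∈[0,T]} |yⁱ_t|^p] < ∞ for i = 1,2, one has 𝐄[sup_{t∈[0,T]} |Φ(y¹)_t − Φ(y²)_t|^p]^{1/p} ≤ (1+κ) 𝐄[sup_{t∈[0,T]} |y¹_t − y²_t|^p]^{1/p}. -/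
open MeasureTheory Filter Topology

/-- The reflection map `Φ(y)_t := y_t + sup_{s ∈ [t,T]} L_s(y_s)`. -/
noncomputable def Phi {Ω : Type*} [MeasurableSpace Ω] (P : Measure Ω)
    (ℓ : Ω → ℝ → ℝ → ℝ) (T : ℝ) (y : ℝ → Ω → ℝ) (t : ℝ) (ω : Ω) : ℝ :=
  y t ω + ⨆ s : Set.Icc t T, LopT P ℓ s (y (s : ℝ))

/-!
Since `ℓ(ω, t, ·)` has slopes between `C` and `κC`, the function `x ↦ 𝐄[ℓ(·, t, x + η)]` has slope
at least `C` and moves by at most `κC 𝐄|η - θ|` when `η` is replaced by `θ`. Its first nonnegative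
point `L_t(η)` therefore moves by at most `κ 𝐄|η - θ|`, and so does the supremum over `s ∈ [t, T]`.
This gives the pathwise bound `sup |Φ(y¹) - Φ(y²)| ≤ sup |y¹ - y²| + κ 𝐄[sup |y¹ - y²|]`, and the
`L^p` estimate follows from Minkowski's inequality and `‖·‖₁ ≤ ‖·‖_p` on a probability space.
-/

section FirstPassage

/-- The first point `x ≥ 0` at which `φ` is nonnegative; `LopT P ℓ t η` is the first passage of
`x ↦ 𝐄[ℓ(·, t, x + η)]`. The value is `0` if there is no such point. -/
noncomputable def firstPassage (φ : ℝ → ℝ) : ℝ :=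
  sInf {x | 0 ≤ x ∧ 0 ≤ φ x}

variable {φ ψ : ℝ → ℝ} {c x d δ : ℝ}

lemma firstPassage_le (hx : 0 ≤ x) (hφx : 0 ≤ φ x) : firstPassage φ ≤ x :=
  csInf_le ⟨0, fun _ hy => hy.1⟩ ⟨hx, hφx⟩

lemma add_mul_le_of_monotone_sub_mul (hφ : Monotone fun x => φ x - c * x) (hd : 0 ≤ d) (x : ℝ) :
    φ x + c * d ≤ φ (x + d) := by
  have h : φ x - c * x ≤ φ (x + d) - c * (x + d) := hφ (le_add_of_nonneg_right hd)
  linarith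

lemma nonneg_apply_abs_div (hc : 0 < c) (hφ : Monotone fun x => φ x - c * x) :
    0 ≤ φ (|φ 0| / c) := by
  have h := add_mul_le_of_monotone_sub_mul hφ (div_nonneg (abs_nonneg (φ 0)) hc.le) 0
  rw [mul_div_cancel₀ _ hc.ne', zero_add] at h
  linarith [neg_abs_le (φ 0)]

lemma firstPassage_le_abs_div (hc : 0 < c) (hφ : Monotone fun x => φ x - c * x) :
    firstPassage φ ≤ |φ 0| / c :=
  firstPassage_le (by positivity) (nonneg_apply_abs_div hc hφ)

lemma firstPassage_le_add (hc : 0 < c) (hφ : Monotone fun x => φ x - c * x)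
    (hψ : Monotone fun x => ψ x - c * x) (h : ∀ x, |φ x - ψ x| ≤ δ) :
    firstPassage φ ≤ firstPassage ψ + δ / c := by
  have hδ : 0 ≤ δ / c := div_nonneg ((abs_nonneg _).trans (h 0)) hc.le
  rw [← sub_le_iff_le_add]
  refine le_csInf ⟨|ψ 0| / c, by positivity, nonneg_apply_abs_div hc hψ⟩ fun x ⟨hx, hψx⟩ => ?_
  refine sub_le_iff_le_add.2 (firstPassage_le (add_nonneg hx hδ) ?_)
  have hshift := add_mul_le_of_monotone_sub_mul hφ hδ x
  rw [mul_div_cancel₀ _ hc.ne'] at hshift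
  linarith [(abs_le.1 (h x)).1]

lemma abs_firstPassage_sub_le (hc : 0 < c) (hφ : Monotone fun x => φ x - c * x)
    (hψ : Monotone fun x => ψ x - c * x) (h : ∀ x, |φ x - ψ x| ≤ δ) :
    |firstPassage φ - firstPassage ψ| ≤ δ / c :=
  abs_sub_le_iff.2
    ⟨sub_le_iff_le_add'.2 (firstPassage_le_add hc hφ hψ h),
      sub_le_iff_le_add'.2 (firstPassage_le_add hc hψ hφ fun x => abs_sub_comm (φ x) _ ▸ h x)⟩

end FirstPassage

section LpNorm

variable {Ω E F : Type*} [MeasurableSpace Ω] {P : Measure Ω} [NormedAddCommGroup E]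
  [NormedAddCommGroup F] {p : ℝ}

lemma memLp_of_integrable_norm_rpow {f : Ω → E} (hp : 0 < p) (hf : AEStronglyMeasurable f P)
    (hi : Integrable (fun ω => ‖f ω‖ ^ p) P) : MemLp f (ENNReal.ofReal p) P := by
  rw [← integrable_norm_rpow_iff hf (by simpa using hp) ENNReal.ofReal_ne_top,
    ENNReal.toReal_ofReal hp.le]
  exact hi

lemma toReal_eLpNorm_ofReal {f : Ω → E} (hp : 0 < p) (hf : AEStronglyMeasurable f P) :
    (eLpNorm f (ENNReal.ofReal p) P).toReal = (∫ ω, ‖f ω‖ ^ p ∂P) ^ (1 / p) := by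
  rw [toReal_eLpNorm hf, lpNorm_eq_integral_norm_rpow_toReal (by simpa using hp)
    ENNReal.ofReal_ne_top hf, ENNReal.toReal_ofReal hp.le, one_div]

-- If `‖f‖ ^ p` is not integrable, then the left-hand side takes the junk value `0`.
lemma rpow_integral_norm_rpow_le_toReal_eLpNorm (f : Ω → E) (hp : 0 < p) :
    (∫ ω, ‖f ω‖ ^ p ∂P) ^ (1 / p) ≤ (eLpNorm f (ENNReal.ofReal p) P).toReal := by
  by_cases hi : Integrable (fun ω => ‖f ω‖ ^ p) P
  · have hm : AEStronglyMeasurable (fun ω => ‖f ω‖) P := by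
      have hroot := (hi.aemeasurable.pow_const (1 / p)).aestronglyMeasurable
      simpa only [one_div, Real.rpow_rpow_inv (norm_nonneg _) hp.ne'] using hroot
    have h := toReal_eLpNorm_ofReal hp hm
    simp only [norm_norm, eLpNorm_norm] at h
    exact h.ge
  · rw [integral_undef hi, Real.zero_rpow (one_div_pos.2 hp).ne']
    exact ENNReal.toReal_nonneg

lemma rpow_integral_norm_rpow_le_mul_of_eLpNorm_le {f : Ω → E} {g : Ω → F} {a : ℝ} (hp : 0 < p)
    (ha : 0 ≤ a) (hg : MemLp g (ENNReal.ofReal p) P)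
    (h : eLpNorm f (ENNReal.ofReal p) P ≤ ENNReal.ofReal a * eLpNorm g (ENNReal.ofReal p) P) :
    (∫ ω, ‖f ω‖ ^ p ∂P) ^ (1 / p) ≤ a * (∫ ω, ‖g ω‖ ^ p ∂P) ^ (1 / p) :=
  calc (∫ ω, ‖f ω‖ ^ p ∂P) ^ (1 / p) ≤ (eLpNorm f (ENNReal.ofReal p) P).toReal :=
        rpow_integral_norm_rpow_le_toReal_eLpNorm f hp
    _ ≤ (ENNReal.ofReal a * eLpNorm g (ENNReal.ofReal p) P).toReal :=
        ENNReal.toReal_mono (ENNReal.mul_ne_top ENNReal.ofReal_ne_top hg.eLpNorm_ne_top) h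
    _ = a * (∫ ω, ‖g ω‖ ^ p ∂P) ^ (1 / p) := by
        rw [ENNReal.toReal_mul, ENNReal.toReal_ofReal ha,
          toReal_eLpNorm_ofReal hp hg.aestronglyMeasurable]

lemma eLpNorm_le_of_norm_le_add_mul_integral [IsProbabilityMeasure P] {q : ENNReal} (hq : 1 ≤ q)
    {f : Ω → E} {g : Ω → F} {κ : ℝ} (hκ : 0 ≤ κ) (hf : AEStronglyMeasurable f P)
    (h : ∀ ω, ‖g ω‖ ≤ ‖f ω‖ + κ * ∫ ω', ‖f ω'‖ ∂P) :
    eLpNorm g q P ≤ ENNReal.ofReal (1 + κ) * eLpNorm f q P := by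
  set m := ∫ ω, ‖f ω‖ ∂P
  have hm : 0 ≤ m := integral_nonneg fun _ => norm_nonneg _
  have hmf : ENNReal.ofReal m ≤ eLpNorm f q P :=
    calc ENNReal.ofReal m ≤ eLpNorm f 1 P := by
          rw [show m = lpNorm f 1 P from (lpNorm_one_eq_integral_norm hf).symm,
            ← toReal_eLpNorm hf]
          exact ENNReal.ofReal_toReal_le
      _ ≤ eLpNorm f q P := eLpNorm_le_eLpNorm_of_exponent_le hq hf
  have hconst : eLpNorm (fun _ : Ω => κ * m) q P = ENNReal.ofReal κ * ENNReal.ofReal m := by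
    rw [eLpNorm_const _ (zero_lt_one.trans_le hq).ne' (IsProbabilityMeasure.ne_zero P),
      measure_univ, ENNReal.one_rpow, mul_one, Real.enorm_of_nonneg (mul_nonneg hκ hm),
      ENNReal.ofReal_mul hκ]
  calc eLpNorm g q P ≤ eLpNorm ((fun ω => ‖f ω‖) + fun _ => κ * m) q P := eLpNorm_mono_real h
    _ ≤ eLpNorm f q P + ENNReal.ofReal κ * ENNReal.ofReal m := by
        rw [← hconst, ← eLpNorm_norm f]
        exact eLpNorm_add_le hf.norm aestronglyMeasurable_const hq
    _ ≤ eLpNorm f q P + ENNReal.ofReal κ * eLpNorm f q P := by gcongr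
    _ = ENNReal.ofReal (1 + κ) * eLpNorm f q P := by
        rw [ENNReal.ofReal_add zero_le_one hκ, ENNReal.ofReal_one, add_mul, one_mul]

end LpNorm

section Supremum

lemma abs_ciSup_sub_ciSup_le {ι : Type*} [Nonempty ι] {f g : ι → ℝ} {a : ℝ}
    (hf : BddAbove (Set.range f)) (hg : BddAbove (Set.range g)) (h : ∀ i, |f i - g i| ≤ a) :
    |(⨆ i, f i) - ⨆ i, g i| ≤ a := by
  refine abs_sub_le_iff.2 ⟨sub_le_iff_le_add'.2 (ciSup_le fun i => ?_),
    sub_le_iff_le_add'.2 (ciSup_le fun i => ?_)⟩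
  · linarith [(abs_le.1 (h i)).2, le_ciSup hg i]
  · linarith [(abs_le.1 (h i)).1, le_ciSup hf i]

/-- The pathwise supremum `sup_i |X_i|` of a process `X`; the `L^p` norm of this random variable is
the norm in which the reflection map is Lipschitz. It is `0` on paths that are unbounded. -/
noncomputable def supAbs {Ω ι : Type*} (X : ι → Ω → ℝ) (ω : Ω) : ℝ :=
  ⨆ i, |X i ω|

variable {Ω ι : Type*} {X Y : ι → Ω → ℝ}

lemma supAbs_nonneg (X : ι → Ω → ℝ) (ω : Ω) : 0 ≤ supAbs X ω :=
  Real.iSup_nonneg fun _ => abs_nonneg _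

lemma supAbs_le {ω : Ω} {a : ℝ} (ha : 0 ≤ a) (h : ∀ i, |X i ω| ≤ a) : supAbs X ω ≤ a :=
  Real.iSup_le h ha

variable [TopologicalSpace ι]

lemma abs_le_supAbs [CompactSpace ι] (hX : ∀ ω, Continuous fun i => X i ω) (i : ι) (ω : Ω) :
    |X i ω| ≤ supAbs X ω :=
  le_ciSup (isCompact_range (hX ω).abs).bddAbove i

lemma supAbs_sub_le [CompactSpace ι] (hX : ∀ ω, Continuous fun i => X i ω)
    (hY : ∀ ω, Continuous fun i => Y i ω) (ω : Ω) : supAbs (X - Y) ω ≤ supAbs X ω + supAbs Y ω :=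
  supAbs_le (add_nonneg (supAbs_nonneg X ω) (supAbs_nonneg Y ω)) fun i =>
    (abs_sub _ _).trans (add_le_add (abs_le_supAbs hX i ω) (abs_le_supAbs hY i ω))

variable [MeasurableSpace Ω] {P : Measure Ω}

/-- Membership of a process `X` with time set `ι` in the space `𝒮^p`: `X` has measurable marginals,
continuous paths and a pathwise supremum in `L^p`. -/
structure MemSp (X : ι → Ω → ℝ) (p : ENNReal) (P : Measure Ω) : Prop where
  measurable (i : ι) : Measurable (X i)
  continuous (ω : Ω) : Continuous fun i => X i ω
  memLp_supAbs : MemLp (supAbs X) p P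

namespace MemSp

lemma mono_exponent [IsFiniteMeasure P] {p q : ENNReal} (hX : MemSp X q P) (hpq : p ≤ q) :
    MemSp X p P :=
  ⟨hX.measurable, hX.continuous, hX.memLp_supAbs.mono_exponent hpq⟩

lemma integrable_supAbs (hX : MemSp X 1 P) : Integrable (supAbs X) P :=
  memLp_one_iff_integrable.1 hX.memLp_supAbs

variable [CompactSpace ι]

lemma integrable (hX : MemSp X 1 P) (i : ι) : Integrable (X i) P :=
  hX.integrable_supAbs.mono' (hX.measurable i).aestronglyMeasurable
    (ae_of_all _ fun ω => abs_le_supAbs hX.continuous i ω)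

lemma integral_abs_le (hX : MemSp X 1 P) (i : ι) :
    ∫ ω, |X i ω| ∂P ≤ ∫ ω, supAbs X ω ∂P :=
  integral_mono (hX.integrable i).abs hX.integrable_supAbs
    fun ω => abs_le_supAbs hX.continuous i ω

end MemSp

variable [CompactSpace ι] [TopologicalSpace.SeparableSpace ι]

lemma measurable_supAbs (hXm : ∀ i, Measurable (X i)) (hX : ∀ ω, Continuous fun i => X i ω) :
    Measurable (supAbs X) := by
  obtain ⟨S, hS, hSd⟩ := TopologicalSpace.exists_countable_dense ι
  have : Countable S := hS
  have hsup : supAbs X = fun ω => ⨆ s : S, |X s ω| := funext fun ω =>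
    (hSd.ciSup (hX ω).abs (isCompact_range (hX ω).abs).bddAbove).symm
  exact hsup ▸ Measurable.iSup fun s => (hXm s).abs

lemma memSp_of_integrable_rpow {p : ℝ} (hp : 0 < p) (hXm : ∀ i, Measurable (X i))
    (hX : ∀ ω, Continuous fun i => X i ω)
    (hi : Integrable (fun ω => supAbs X ω ^ p) P) : MemSp X (ENNReal.ofReal p) P := by
  refine ⟨hXm, hX, memLp_of_integrable_norm_rpow hp
    (measurable_supAbs hXm hX).aestronglyMeasurable ?_⟩
  simpa only [Real.norm_of_nonneg (supAbs_nonneg X _)] using hi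

lemma MemSp.sub {p : ENNReal} (hX : MemSp X p P) (hY : MemSp Y p P) : MemSp (X - Y) p P where
  measurable i := (hX.measurable i).sub (hY.measurable i)
  continuous ω := (hX.continuous ω).sub (hY.continuous ω)
  memLp_supAbs := by
    have hm : Measurable (supAbs (X - Y)) := measurable_supAbs
      (fun i => (hX.measurable i).sub (hY.measurable i))
      fun ω => (hX.continuous ω).sub (hY.continuous ω)
    refine (hX.memLp_supAbs.add hY.memLp_supAbs).mono' hm.aestronglyMeasurable
      (ae_of_all _ fun ω => ?_)
    rw [Real.norm_of_nonneg (supAbs_nonneg _ ω)]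
    exact supAbs_sub_le hX.continuous hY.continuous ω

end Supremum

section LipschitzComposition

open scoped NNReal

variable {Ω E F : Type*} [MeasurableSpace Ω] {P : Measure Ω} [NormedAddCommGroup E]
  [MeasurableSpace E] [BorelSpace E] [SecondCountableTopology E] [NormedAddCommGroup F]
  {f : Ω → E → F} {η θ : Ω → E} {K : ℝ≥0}

lemma integrable_comp_of_lipschitzWith (hf : ∀ x, StronglyMeasurable fun ω => f ω x)
    (hlip : ∀ ω, LipschitzWith K (f ω)) (h₀ : Integrable (fun ω => f ω 0) P)
    (hη : Integrable η P) : Integrable (fun ω => f ω (η ω)) P := by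
  have hm : AEStronglyMeasurable (fun ω => f ω (η ω)) P :=
    (stronglyMeasurable_uncurry_of_continuous_of_stronglyMeasurable
      (fun ω => (hlip ω).continuous) hf).aestronglyMeasurable.comp_aemeasurable
        (hη.aemeasurable.prodMk aemeasurable_id)
  refine (h₀.norm.add (hη.norm.const_mul K)).mono' hm (ae_of_all _ fun ω => ?_)
  calc ‖f ω (η ω)‖ ≤ ‖f ω 0‖ + ‖f ω (η ω) - f ω 0‖ := norm_le_norm_add_norm_sub' _ _
    _ ≤ ‖f ω 0‖ + K * ‖η ω‖ := by
        gcongr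
        simpa only [sub_zero] using (hlip ω).norm_sub_le (η ω) 0

lemma norm_integral_comp_sub_integral_comp_le [NormedSpace ℝ F]
    (hf : ∀ x, StronglyMeasurable fun ω => f ω x) (hlip : ∀ ω, LipschitzWith K (f ω))
    (h₀ : Integrable (fun ω => f ω 0) P) (hη : Integrable η P) (hθ : Integrable θ P) :
    ‖∫ ω, f ω (η ω) ∂P - ∫ ω, f ω (θ ω) ∂P‖ ≤ K * ∫ ω, ‖η ω - θ ω‖ ∂P := by
  rw [← integral_sub (integrable_comp_of_lipschitzWith hf hlip h₀ hη)
    (integrable_comp_of_lipschitzWith hf hlip h₀ hθ), ← integral_const_mul]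
  exact norm_integral_le_of_norm_le ((hη.sub hθ).norm.const_mul _)
    (ae_of_all _ fun ω => (hlip ω).norm_sub_le _ _)

end LipschitzComposition

section OneTime

open scoped NNReal

/-- The assumptions on a random loss function `f = ℓ(·, t, ·)` at a fixed time that make `L_t`
Lipschitz: `f` is measurable with integrable value at `0`, and its slopes lie in `[c, K]`. The lower
slope bound is encoded as monotonicity of `y ↦ f ω y - c * y`. -/
structure IsSlopeBoundedLoss {Ω : Type*} [MeasurableSpace Ω] (P : Measure Ω) (f : Ω → ℝ → ℝ)
    (c : ℝ) (K : ℝ≥0) : Prop where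
  measurable (y : ℝ) : Measurable fun ω => f ω y
  integrable_zero : Integrable (fun ω => f ω 0) P
  monotone_sub_mul (ω : Ω) : Monotone fun y => f ω y - c * y
  lipschitzWith (ω : Ω) : LipschitzWith K (f ω)

lemma monotone_sub_mul_of_mul_abs_sub_le {f : ℝ → ℝ} {c : ℝ} (hf : Monotone f)
    (h : ∀ x y, c * |x - y| ≤ |f x - f y|) : Monotone fun x => f x - c * x := by
  intro x y hxy
  have hslope := h y x
  rw [abs_of_nonneg (sub_nonneg.2 hxy), abs_of_nonneg (sub_nonneg.2 (hf hxy))] at hslope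
  change f x - c * x ≤ f y - c * y
  linarith

variable {Ω : Type*} [MeasurableSpace Ω] {P : Measure Ω} {f : Ω → ℝ → ℝ} {η θ : Ω → ℝ}
  {c : ℝ} {K : ℝ≥0}

lemma isSlopeBoundedLoss_of_biLipschitz {κ : ℝ} (hmeas : ∀ y, Measurable fun ω => f ω y)
    (hint : Integrable (fun ω => f ω 0) P) (hmono : ∀ ω, Monotone (f ω))
    (hbilip : ∀ ω x y, c * |x - y| ≤ |f ω x - f ω y| ∧ |f ω x - f ω y| ≤ κ * |x - y|) :
    IsSlopeBoundedLoss P f c κ.toNNReal where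
  measurable := hmeas
  integrable_zero := hint
  monotone_sub_mul ω := monotone_sub_mul_of_mul_abs_sub_le (hmono ω) fun x y => (hbilip ω x y).1
  lipschitzWith ω := LipschitzWith.of_dist_le' fun x y => (hbilip ω x y).2

namespace IsSlopeBoundedLoss

lemma abs_integral_comp_sub_le (hf : IsSlopeBoundedLoss P f c K) (hη : Integrable η P)
    (hθ : Integrable θ P) :
    |∫ ω, f ω (η ω) ∂P - ∫ ω, f ω (θ ω) ∂P| ≤ K * ∫ ω, |η ω - θ ω| ∂P :=
  norm_integral_comp_sub_integral_comp_le (fun y => (hf.measurable y).stronglyMeasurable)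
    hf.lipschitzWith hf.integrable_zero hη hθ

variable [IsProbabilityMeasure P]

lemma integrable_shift (hf : IsSlopeBoundedLoss P f c K) (hη : Integrable η P) (x : ℝ) :
    Integrable (fun ω => f ω (x + η ω)) P :=
  integrable_comp_of_lipschitzWith (fun y => (hf.measurable y).stronglyMeasurable)
    hf.lipschitzWith hf.integrable_zero ((integrable_const x).add hη)

lemma monotone_integral_shift_sub_mul (hf : IsSlopeBoundedLoss P f c K) (hη : Integrable η P) :
    Monotone fun x => ∫ ω, f ω (x + η ω) ∂P - c * x := by
  have hint (x : ℝ) := (hf.integrable_shift hη x).sub (integrable_const (c * x))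
  have hsub (x : ℝ) : ∫ ω, f ω (x + η ω) ∂P - c * x = ∫ ω, (f ω (x + η ω) - c * x) ∂P := by
    rw [integral_sub (hf.integrable_shift hη x) (integrable_const _), integral_const,
      probReal_univ, one_smul]
  intro x y hxy
  simp only [hsub]
  refine integral_mono (hint x) (hint y) fun ω => ?_
  have h := hf.monotone_sub_mul ω (add_le_add_left hxy (η ω))
  simp only [mul_add] at h ⊢
  linarith

lemma firstPassage_integral_le (hf : IsSlopeBoundedLoss P f c K) (hc : 0 < c)
    (hη : Integrable η P) :
    firstPassage (fun x => ∫ ω, f ω (x + η ω) ∂P) ≤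
      (|∫ ω, f ω 0 ∂P| + K * ∫ ω, |η ω| ∂P) / c := by
  have hfp := firstPassage_le_abs_div hc (hf.monotone_integral_shift_sub_mul hη)
  have hdist : |∫ ω, f ω (η ω) ∂P - ∫ ω, f ω 0 ∂P| ≤ K * ∫ ω, |η ω| ∂P := by
    simpa only [sub_zero] using hf.abs_integral_comp_sub_le hη (integrable_const 0)
  simp only [zero_add] at hfp
  refine hfp.trans ?_
  gcongr
  linarith [abs_sub_abs_le_abs_sub (∫ ω, f ω (η ω) ∂P) (∫ ω, f ω 0 ∂P)]

lemma abs_firstPassage_integral_sub_le (hf : IsSlopeBoundedLoss P f c K) (hc : 0 < c)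
    (hη : Integrable η P) (hθ : Integrable θ P) :
    |firstPassage (fun x => ∫ ω, f ω (x + η ω) ∂P) -
        firstPassage (fun x => ∫ ω, f ω (x + θ ω) ∂P)| ≤ K / c * ∫ ω, |η ω - θ ω| ∂P := by
  rw [div_mul_eq_mul_div]
  refine abs_firstPassage_sub_le hc (hf.monotone_integral_shift_sub_mul hη)
    (hf.monotone_integral_shift_sub_mul hθ) fun x => ?_
  simpa only [Pi.add_apply, add_sub_add_left_eq_sub] using hf.abs_integral_comp_sub_le
    ((integrable_const x).add hη) ((integrable_const x).add hθ)

end IsSlopeBoundedLoss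

end OneTime

section ReflectionMap

open scoped NNReal

variable {Ω : Type*} [MeasurableSpace Ω] {P : Measure Ω} [IsProbabilityMeasure P]
  {ℓ : Ω → ℝ → ℝ → ℝ} {c M : ℝ} {K : ℝ≥0}

lemma bddAbove_range_LopT {ι : Type*} {τ : ι → ℝ} {η : ι → Ω → ℝ} {B : ℝ} (hc : 0 < c)
    (hℓ : ∀ i, IsSlopeBoundedLoss P (fun ω => ℓ ω (τ i)) c K)
    (hM : ∀ i, |∫ ω, ℓ ω (τ i) 0 ∂P| ≤ M) (hη : ∀ i, Integrable (η i) P)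
    (hB : ∀ i, ∫ ω, |η i ω| ∂P ≤ B) :
    BddAbove (Set.range fun i => LopT P ℓ (τ i) (η i)) := by
  refine ⟨(M + K * B) / c, ?_⟩
  rintro _ ⟨i, rfl⟩
  refine ((hℓ i).firstPassage_integral_le hc (hη i)).trans ?_
  gcongr
  exacts [hM i, hB i]

lemma abs_Phi_sub_Phi_le {T t D B₁ B₂ : ℝ} {y₁ y₂ : ℝ → Ω → ℝ} (hc : 0 < c) (ht : t ≤ T)
    (hℓ : ∀ s ∈ Set.Icc t T, IsSlopeBoundedLoss P (fun ω => ℓ ω s) c K)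
    (hM : ∀ s ∈ Set.Icc t T, |∫ ω, ℓ ω s 0 ∂P| ≤ M)
    (hy₁ : ∀ s ∈ Set.Icc t T, Integrable (y₁ s) P) (hy₂ : ∀ s ∈ Set.Icc t T, Integrable (y₂ s) P)
    (hB₁ : ∀ s ∈ Set.Icc t T, ∫ ω, |y₁ s ω| ∂P ≤ B₁)
    (hB₂ : ∀ s ∈ Set.Icc t T, ∫ ω, |y₂ s ω| ∂P ≤ B₂)
    (hD : ∀ s ∈ Set.Icc t T, ∫ ω, |y₁ s ω - y₂ s ω| ∂P ≤ D) (ω : Ω) :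
    |Phi P ℓ T y₁ t ω - Phi P ℓ T y₂ t ω| ≤ |y₁ t ω - y₂ t ω| + K / c * D := by
  have : Nonempty (Set.Icc t T) := ⟨⟨t, le_rfl, ht⟩⟩
  have hbdd₁ : BddAbove (Set.range fun s : Set.Icc t T => LopT P ℓ s (y₁ s)) :=
    bddAbove_range_LopT hc (fun s => hℓ s s.2) (fun s => hM s s.2) (fun s => hy₁ s s.2)
      fun s => hB₁ s s.2
  have hbdd₂ : BddAbove (Set.range fun s : Set.Icc t T => LopT P ℓ s (y₂ s)) :=
    bddAbove_range_LopT hc (fun s => hℓ s s.2) (fun s => hM s s.2) (fun s => hy₂ s s.2)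
      fun s => hB₂ s s.2
  have hL (s : Set.Icc t T) : |LopT P ℓ s (y₁ s) - LopT P ℓ s (y₂ s)| ≤ K / c * D :=
    ((hℓ s s.2).abs_firstPassage_integral_sub_le hc (hy₁ s s.2) (hy₂ s s.2)).trans
      (mul_le_mul_of_nonneg_left (hD s s.2) (by positivity))
  simp only [Phi, add_sub_add_comm]
  exact (abs_add_le _ _).trans (by gcongr; exact abs_ciSup_sub_ciSup_le hbdd₁ hbdd₂ hL)

lemma supAbs_Phi_sub_le {T : ℝ} {y₁ y₂ : ℝ → Ω → ℝ} (hc : 0 < c)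
    (hℓ : ∀ t ∈ Set.Icc 0 T, IsSlopeBoundedLoss P (fun ω => ℓ ω t) c K)
    (hM : ∀ t ∈ Set.Icc 0 T, |∫ ω, ℓ ω t 0 ∂P| ≤ M)
    (hy₁ : MemSp (fun t : Set.Icc 0 T => y₁ t) 1 P)
    (hy₂ : MemSp (fun t : Set.Icc 0 T => y₂ t) 1 P) (ω : Ω) :
    supAbs (fun t : Set.Icc 0 T => Phi P ℓ T y₁ t - Phi P ℓ T y₂ t) ω ≤
      supAbs (fun t : Set.Icc 0 T => y₁ t - y₂ t) ω +
        K / c * ∫ ω', supAbs (fun t : Set.Icc 0 T => y₁ t - y₂ t) ω' ∂P := by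
  have hy : MemSp (fun t : Set.Icc 0 T => y₁ t - y₂ t) 1 P := hy₁.sub hy₂
  have hD : 0 ≤ ∫ ω', supAbs (fun t : Set.Icc 0 T => y₁ t - y₂ t) ω' ∂P :=
    integral_nonneg (supAbs_nonneg _)
  refine supAbs_le (add_nonneg (supAbs_nonneg _ ω) (by positivity)) fun t => ?_
  have hsub : Set.Icc (t : ℝ) T ⊆ Set.Icc 0 T := Set.Icc_subset_Icc_left t.2.1
  refine (abs_Phi_sub_Phi_le hc t.2.2 (fun s hs => hℓ s (hsub hs)) (fun s hs => hM s (hsub hs))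
    (fun s hs => hy₁.integrable ⟨s, hsub hs⟩) (fun s hs => hy₂.integrable ⟨s, hsub hs⟩)
    (fun s hs => hy₁.integral_abs_le ⟨s, hsub hs⟩) (fun s hs => hy₂.integral_abs_le ⟨s, hsub hs⟩)
    (fun s hs => hy.integral_abs_le ⟨s, hsub hs⟩) ω).trans ?_
  gcongr
  exact abs_le_supAbs hy.continuous t ω

lemma eLpNorm_supAbs_Phi_sub_le {T : ℝ} {y₁ y₂ : ℝ → Ω → ℝ} {p : ENNReal} (hp : 1 ≤ p)
    (hc : 0 < c) (hℓ : ∀ t ∈ Set.Icc 0 T, IsSlopeBoundedLoss P (fun ω => ℓ ω t) c K)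
    (hM : ∀ t ∈ Set.Icc 0 T, |∫ ω, ℓ ω t 0 ∂P| ≤ M)
    (hy₁ : MemSp (fun t : Set.Icc 0 T => y₁ t) 1 P)
    (hy₂ : MemSp (fun t : Set.Icc 0 T => y₂ t) 1 P) :
    eLpNorm (supAbs fun t : Set.Icc 0 T => Phi P ℓ T y₁ t - Phi P ℓ T y₂ t) p P ≤
      ENNReal.ofReal (1 + K / c) * eLpNorm (supAbs fun t : Set.Icc 0 T => y₁ t - y₂ t) p P := by
  refine eLpNorm_le_of_norm_le_add_mul_integral hp (by positivity)
    (hy₁.sub hy₂).memLp_supAbs.aestronglyMeasurable fun ω => ?_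
  simpa only [Real.norm_of_nonneg (supAbs_nonneg _ _)] using supAbs_Phi_sub_le hc hℓ hM hy₁ hy₂ ω

end ReflectionMap

theorem stmt7_general {Ω : Type*} [MeasurableSpace Ω] (P : Measure Ω) [IsProbabilityMeasure P]
    (T : ℝ) (ℓ : Ω → ℝ → ℝ → ℝ)
    (hmeas : ∀ t ∈ Set.Icc (0 : ℝ) T, ∀ y, Measurable fun ω => ℓ ω t y)
    (hmono : ∀ ω, ∀ t ∈ Set.Icc (0 : ℝ) T, Monotone (ℓ ω t))
    (Z : Ω → ℝ) (hZ : Integrable Z P)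
    (hbound : ∀ ω, ∀ t ∈ Set.Icc (0 : ℝ) T, |ℓ ω t 0| ≤ Z ω)
    (κ C : ℝ) (hκ : 0 ≤ κ) (hC : 0 < C)
    (hbilip : ∀ ω, ∀ t ∈ Set.Icc (0 : ℝ) T, ∀ y₁ y₂,
      C * |y₁ - y₂| ≤ |ℓ ω t y₁ - ℓ ω t y₂| ∧ |ℓ ω t y₁ - ℓ ω t y₂| ≤ κ * C * |y₁ - y₂|)
    (p : ℝ) (hp : 1 ≤ p)
    (y₁ y₂ : ℝ → Ω → ℝ)
    (hymeas₁ : ∀ t ∈ Set.Icc (0 : ℝ) T, Measurable (y₁ t))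
    (hymeas₂ : ∀ t ∈ Set.Icc (0 : ℝ) T, Measurable (y₂ t))
    (hypath₁ : ∀ ω, ContinuousOn (fun t => y₁ t ω) (Set.Icc 0 T))
    (hypath₂ : ∀ ω, ContinuousOn (fun t => y₂ t ω) (Set.Icc 0 T))
    (hysup₁ : Integrable (fun ω => (⨆ t : Set.Icc (0 : ℝ) T, |y₁ t ω|) ^ p) P)
    (hysup₂ : Integrable (fun ω => (⨆ t : Set.Icc (0 : ℝ) T, |y₂ t ω|) ^ p) P) :
    (∫ ω, (⨆ t : Set.Icc (0 : ℝ) T, |Phi P ℓ T y₁ t ω - Phi P ℓ T y₂ t ω|) ^ p ∂P) ^ (1 / p) ≤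
      (1 + κ) * (∫ ω, (⨆ t : Set.Icc (0 : ℝ) T, |y₁ t ω - y₂ t ω|) ^ p ∂P) ^ (1 / p) := by
  have hp₀ : 0 < p := zero_lt_one.trans_le hp
  have hq : 1 ≤ ENNReal.ofReal p := ENNReal.one_le_ofReal.2 hp
  have hS₁ : MemSp (fun t : Set.Icc 0 T => y₁ t) (ENNReal.ofReal p) P :=
    memSp_of_integrable_rpow hp₀ (fun t => hymeas₁ t t.2)
      (fun ω => continuousOn_iff_continuous_domRestrict.1 (hypath₁ ω)) hysup₁
  have hS₂ : MemSp (fun t : Set.Icc 0 T => y₂ t) (ENNReal.ofReal p) P :=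
    memSp_of_integrable_rpow hp₀ (fun t => hymeas₂ t t.2)
      (fun ω => continuousOn_iff_continuous_domRestrict.1 (hypath₂ ω)) hysup₂
  have hae (t : ℝ) (ht : t ∈ Set.Icc 0 T) : ∀ᵐ ω ∂P, ‖ℓ ω t 0‖ ≤ Z ω :=
    ae_of_all _ fun ω => hbound ω t ht
  have hM (t : ℝ) (ht : t ∈ Set.Icc 0 T) : |∫ ω, ℓ ω t 0 ∂P| ≤ ∫ ω, Z ω ∂P :=
    norm_integral_le_of_norm_le hZ (hae t ht)
  have hℓ (t : ℝ) (ht : t ∈ Set.Icc 0 T) := isSlopeBoundedLoss_of_biLipschitz (hmeas t ht)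
    (hZ.mono' (hmeas t ht 0).aestronglyMeasurable (hae t ht)) (fun ω => hmono ω t ht)
    fun ω => hbilip ω t ht
  have hnorm := eLpNorm_supAbs_Phi_sub_le hq hC hℓ hM (hS₁.mono_exponent hq) (hS₂.mono_exponent hq)
  rw [Real.coe_toNNReal _ (by positivity), mul_div_cancel_right₀ _ hC.ne'] at hnorm
  have hrpow := rpow_integral_norm_rpow_le_mul_of_eLpNorm_le hp₀ (by positivity)
    (hS₁.sub hS₂).memLp_supAbs hnorm
  simp only [Real.norm_of_nonneg (supAbs_nonneg _ _)] at hrpow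
  exact hrpow

/-- `(1+κ)`-Lipschitz estimate for the reflection map `Φ` in the
`𝐄[sup_{t∈[0,T]} |·|^p]^{1/p}` norm, for every real `p ≥ 1`. -/
theorem stmt7 {Ω : Type*} [MeasurableSpace Ω] (P : Measure Ω) [IsProbabilityMeasure P]
    (T : ℝ) (hT : 0 < T)
    (ℓ : Ω → ℝ → ℝ → ℝ)
    (hmeas : Measurable (fun p : Ω × ℝ × ℝ => ℓ p.1 p.2.1 p.2.2))
    (hcont : ∀ ω, ContinuousOn (fun p : ℝ × ℝ => ℓ ω p.1 p.2) (Set.Icc 0 T ×ˢ Set.univ))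
    (hmono : ∀ ω, ∀ t ∈ Set.Icc (0 : ℝ) T, StrictMono (fun y => ℓ ω t y))
    (L₀ : ℝ) (hL₀ : 0 < L₀)
    (hgrowth : ∀ ω, ∀ t ∈ Set.Icc (0 : ℝ) T, ∀ y, |ℓ ω t y| ≤ L₀ * (1 + |y|))
    (hlim : ∀ t ∈ Set.Icc (0 : ℝ) T, ∃ l : EReal, 0 < l ∧
      Tendsto (fun x : ℝ => ((∫ ω, ℓ ω t x ∂P : ℝ) : EReal)) atTop (𝓝 l))
    (κ C : ℝ) (hκ : 1 < κ) (hC : 0 < C)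
    (hbilip : ∀ ω, ∀ t ∈ Set.Icc (0 : ℝ) T, ∀ y₁ y₂,
      C * |y₁ - y₂| ≤ |ℓ ω t y₁ - ℓ ω t y₂| ∧ |ℓ ω t y₁ - ℓ ω t y₂| ≤ κ * C * |y₁ - y₂|)
    (p : ℝ) (hp : 1 ≤ p)
    (y₁ y₂ : ℝ → Ω → ℝ)
    (hymeas₁ : Measurable (fun q : ℝ × Ω => y₁ q.1 q.2))
    (hymeas₂ : Measurable (fun q : ℝ × Ω => y₂ q.1 q.2))
    (hypath₁ : ∀ ω, ContinuousOn (fun t => y₁ t ω) (Set.Icc 0 T))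
    (hypath₂ : ∀ ω, ContinuousOn (fun t => y₂ t ω) (Set.Icc 0 T))
    (hysup₁ : Integrable (fun ω => (⨆ t : Set.Icc (0 : ℝ) T, |y₁ t ω|) ^ p) P)
    (hysup₂ : Integrable (fun ω => (⨆ t : Set.Icc (0 : ℝ) T, |y₂ t ω|) ^ p) P) :
    (∫ ω, (⨆ t : Set.Icc (0 : ℝ) T, |Phi P ℓ T y₁ t ω - Phi P ℓ T y₂ t ω|) ^ p ∂P) ^ (1 / p) ≤
      (1 + κ) * (∫ ω, (⨆ t : Set.Icc (0 : ℝ) T, |y₁ t ω - y₂ t ω|) ^ p ∂P) ^ (1 / p) := by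
  exact stmt7_general P T ℓ (fun t _ y => hmeas.comp (measurable_prodMk_right (y := (t, y))))
    (fun ω t ht => (hmono ω t ht).monotone) (fun _ => L₀) (integrable_const L₀)
    (fun ω t ht => by simpa using hgrowth ω t ht 0) κ C (by positivity) hC hbilip p hp y₁ y₂
    (fun _ _ => hymeas₁.of_uncurry_left) (fun _ _ => hymeas₂.of_uncurry_left)
    hypath₁ hypath₂ hysup₁ hysup₂
end
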